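/- arXiv:1303.6030 — 2 statements merged into one kernel-verified Lean document; each statement's English description precedes it below -/
import Mathlib

section
/- Let K be a field of characteristic 0 and S = K[x_1,...,x_n]. Let I ⊆ S be a 0-Borel (strongly stable) monomial ideal and P ⊆ S an opposite 0-Borel monomial ideal. Then dim_K (IP)_d ≥ dim_K (I^lex·P)_d for all d ≥ 0. -/
open MvPolynomial TensorProduct CategoryTheory

noncomputable section

/-- The polynomial ring `S = K[x_1,...,x_n]`, standard graded. -/
abbrev PS (K : Type) [Field K] (n : ℕ) : Type := MvPolynomial (Fin n) K

variable (K : Type) [Field K] (n : ℕ)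

/-- An ideal of `S` is homogeneous if it contains all homogeneous components of its
elements. -/
def IsHomog (I : Ideal (PS K n)) : Prop :=
  ∀ f ∈ I, ∀ d : ℕ, MvPolynomial.homogeneousComponent d f ∈ I

/-- The change of coordinates of `S` induced by `g ∈ GL_n(K)`, determined by
`g(x_i) = ∑_j g_{ji} x_j`. -/
def coordChange (g : GL (Fin n) K) : PS K n →ₐ[K] PS K n :=
  MvPolynomial.aeval (fun i => ∑ j, ((g : Matrix (Fin n) (Fin n) K) j i) • MvPolynomial.X j)

/-- A property `P` holds for a general change of coordinates `g ∈ GL_n(K)` if there is a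
nonempty Zariski open subset `U ⊆ GL_n(K)` on which it holds; equivalently (as `GL_n(K)` is
an irreducible variety over the infinite field `K`) there is a nonzero polynomial `F` in the
matrix entries such that `P g` holds whenever `F` does not vanish at `g`. -/
def generally (P : GL (Fin n) K → Prop) : Prop :=
  ∃ F : MvPolynomial (Fin n × Fin n) K, F ≠ 0 ∧
    ∀ g : GL (Fin n) K,
      MvPolynomial.eval (fun p => (g : Matrix (Fin n) (Fin n) K) p.1 p.2) F ≠ 0 → P g

/-- The Hilbert function: `H(I,d) = dim_K I_d`. -/
def hilb (I : Ideal (PS K n)) (d : ℕ) : ℕ :=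
  Module.finrank K ↥(Submodule.restrictScalars K I ⊓ homogeneousSubmodule (Fin n) K d)

/-- `a <_lex b` for the lexicographic order induced by `x_1 > x_2 > ⋯ > x_n`. -/
def lexLt (a b : Fin n →₀ ℕ) : Prop := Finsupp.Lex (· < ·) (· < ·) a b

/-- `a <_oplex b` for the (opposite) lexicographic order induced by `x_n > ⋯ > x_1`. -/
def oplexLt (a b : Fin n →₀ ℕ) : Prop := Finsupp.Lex (· > ·) (· < ·) a b

/-- The total degree of an exponent vector. -/
def expDeg (m : Fin n →₀ ℕ) : ℕ := ∑ i, m i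

/-- A monomial ideal: together with any polynomial it contains each of its monomials. -/
def IsMonomialIdeal (I : Ideal (PS K n)) : Prop :=
  ∀ f ∈ I, ∀ m ∈ f.support, MvPolynomial.monomial m (1 : K) ∈ I

/-- A lex ideal: a monomial ideal whose monomials form a lex set. -/
def IsLexIdeal (I : Ideal (PS K n)) : Prop :=
  IsMonomialIdeal K n I ∧ ∀ u v : Fin n →₀ ℕ, expDeg n u = expDeg n v →
    MvPolynomial.monomial u (1 : K) ∈ I → lexLt n u v →
      MvPolynomial.monomial v (1 : K) ∈ I

/-- An opposite lex ideal: a monomial ideal whose monomials form an opposite lex set. -/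
def IsOplexIdeal (I : Ideal (PS K n)) : Prop :=
  IsMonomialIdeal K n I ∧ ∀ u v : Fin n →₀ ℕ, expDeg n u = expDeg n v →
    MvPolynomial.monomial u (1 : K) ∈ I → oplexLt n u v →
      MvPolynomial.monomial v (1 : K) ∈ I

/-- The initial ideal `in_r(I)` of `I` with respect to a (strict) monomial order `r`:
the ideal generated by the `r`-maximal monomials of the nonzero elements of `I`. -/
def initialIdealO (r : (Fin n →₀ ℕ) → (Fin n →₀ ℕ) → Prop) (I : Ideal (PS K n)) :
    Ideal (PS K n) :=
  Ideal.span {g | ∃ f ∈ I, ∃ m ∈ f.support,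
    (∀ m' ∈ f.support, m' = m ∨ r m' m) ∧ g = MvPolynomial.monomial m (1 : K)}

/-- A 0-Borel (strongly stable) monomial ideal: for every monomial `u·x_j ∈ I` and every
`i < j`, also `u·x_i ∈ I`. -/
def IsZeroBorel (I : Ideal (PS K n)) : Prop :=
  IsMonomialIdeal K n I ∧ ∀ m : Fin n →₀ ℕ, MvPolynomial.monomial m (1 : K) ∈ I →
    ∀ i j : Fin n, i < j → m j ≠ 0 →
      MvPolynomial.monomial (m + Finsupp.single i 1 - Finsupp.single j 1) (1 : K) ∈ I

/-- An opposite 0-Borel monomial ideal: for every monomial `u·x_j ∈ I` and every `j < i`,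
also `u·x_i ∈ I`. -/
def IsOpZeroBorel (I : Ideal (PS K n)) : Prop :=
  IsMonomialIdeal K n I ∧ ∀ m : Fin n →₀ ℕ, MvPolynomial.monomial m (1 : K) ∈ I →
    ∀ i j : Fin n, j < i → m j ≠ 0 →
      MvPolynomial.monomial (m + Finsupp.single i 1 - Finsupp.single j 1) (1 : K) ∈ I

section BorelHelpers

open Finset Finsupp

variable {n}

/-- Exponent vectors of degree `a` involving only the first `k` variables. -/
def Dk (k a : ℕ) : Finset (Fin n →₀ ℕ) := by
  classical
  exact (Finset.finsuppAntidiag Finset.univ a).filter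
    (fun u => ∀ i : Fin n, k ≤ i.val → u i = 0)

lemma mem_Dk {k a : ℕ} {u : Fin n →₀ ℕ} :
    u ∈ Dk k a ↔ u.degree = a ∧ ∀ i : Fin n, k ≤ i.val → u i = 0 := by
  classical
  simp [Dk, Finset.mem_filter, Finsupp.degree_eq_sum]

open Classical in
/-- The number of elements of `A` of degree `a` in the first `k` variables. -/
def cnt (k a : ℕ) (A : Set (Fin n →₀ ℕ)) : ℕ := ((Dk k a).filter (· ∈ A)).card

/-- strongly stable in degree `a`, in the first `k` variables -/
def SSin (k a : ℕ) (A : Set (Fin n →₀ ℕ)) : Prop :=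
  ∀ (u : Fin n →₀ ℕ) (i j : Fin n), i < j → u + single j 1 ∈ Dk k a →
    u + single j 1 ∈ A → u + single i 1 ∈ A

/-- lex set in degree `a`, in the first `k` variables -/
def LexIn (k a : ℕ) (A : Set (Fin n →₀ ℕ)) : Prop :=
  ∀ u ∈ Dk k a, ∀ v ∈ Dk k a, lexLt n u v → u ∈ A → v ∈ A

/-- upper shadow -/
def sh (k : ℕ) (A : Set (Fin n →₀ ℕ)) : Set (Fin n →₀ ℕ) :=
  {w | ∃ i : Fin n, i.val < k ∧ ∃ u ∈ A, w = u + single i 1}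

/-- layer of `A` -/
def layer (κ : Fin n) (j : ℕ) (A : Set (Fin n →₀ ℕ)) : Set (Fin n →₀ ℕ) :=
  {u | u + single κ j ∈ A}

lemma Dk_mono {k a : ℕ} {u : Fin n →₀ ℕ} (h : u ∈ Dk k a) : u ∈ Dk (k+1) a := by
  rw [mem_Dk] at *
  exact ⟨h.1, fun i hi => h.2 i (by omega)⟩

lemma SSin.mono {k a : ℕ} {A : Set (Fin n →₀ ℕ)} (h : SSin (k+1) a A) : SSin k a A :=
  fun u i j hij hu => h u i j hij (Dk_mono hu)

lemma LexIn.mono {k a : ℕ} {A : Set (Fin n →₀ ℕ)} (h : LexIn (k+1) a A) : LexIn k a A :=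
  fun u hu v hv => h u (Dk_mono hu) v (Dk_mono hv)

lemma add_single_mem_Dk {k a b : ℕ} {u : Fin n →₀ ℕ} {i : Fin n} (hi : i.val < k) :
    u + single i b ∈ Dk k (a + b) ↔ u ∈ Dk k a := by
  rw [mem_Dk, mem_Dk]
  constructor
  · rintro ⟨h1, h2⟩
    refine ⟨by simpa using h1, fun j hj => ?_⟩
    have := h2 j hj
    simp at this
    exact this.1
  · rintro ⟨h1, h2⟩
    refine ⟨by simpa using h1, fun j hj => ?_⟩
    have hne : i ≠ j := by rintro rfl; omega
    simp [h2 j hj, Finsupp.single_apply, hne]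

lemma lt_of_add_single_mem_Dk {k a b : ℕ} {u : Fin n →₀ ℕ} {i : Fin n} (hb : b ≠ 0)
    (h : u + single i b ∈ Dk k a) : i.val < k := by
  by_contra hc
  have := (mem_Dk.1 h).2 i (by omega)
  simp at this
  omega

lemma lexLt_iff {u v : Fin n →₀ ℕ} :
    lexLt n u v ↔ ∃ j, (∀ d, d < j → u d = v d) ∧ u j < v j := Finsupp.lex_def

lemma lexLt_tri (u v : Fin n →₀ ℕ) : lexLt n u v ∨ u = v ∨ lexLt n v u :=
  lt_trichotomy (toLex u) (toLex v)

lemma eq_of_le_degree {u v : Fin n →₀ ℕ} (h : ∀ i, u i ≤ v i) (hd : u.degree = v.degree) :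
    u = v := by
  rw [Finsupp.degree_eq_sum, Finsupp.degree_eq_sum] at hd
  ext i
  exact (Finset.sum_eq_sum_iff_of_le (fun i _ => h i)).1 hd i (Finset.mem_univ i)

lemma LexIn.ss {k a : ℕ} {A : Set (Fin n →₀ ℕ)} (h : LexIn k a A) : SSin k a A := by
  intro u i j hij hu hA
  refine h _ hu _ ?_ ?_ hA
  · have hj := lt_of_add_single_mem_Dk one_ne_zero hu
    obtain ⟨h1, h2⟩ := mem_Dk.1 hu
    refine mem_Dk.2 ⟨by simpa using h1, fun l hl => ?_⟩
    have := h2 l hl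
    simp at this
    have hne : i ≠ l := by rintro rfl; exact absurd hij (by rw [Fin.lt_def]; omega)
    simp [this.1, Finsupp.single_apply, hne]
  · rw [lexLt_iff]
    refine ⟨i, fun d hd => ?_, ?_⟩
    · simp [Finsupp.single_apply, hd.ne', (hd.trans hij).ne']
    · simp [Finsupp.single_apply, hij.ne']

lemma cnt_congr {k a : ℕ} {A B : Set (Fin n →₀ ℕ)} (h : ∀ u ∈ Dk k a, u ∈ A ↔ u ∈ B) :
    cnt k a A = cnt k a B := by
  classical
  unfold cnt
  congr 1
  exact Finset.filter_congr h

lemma cnt_mono {k a : ℕ} {A B : Set (Fin n →₀ ℕ)} (h : ∀ u ∈ Dk k a, u ∈ A → u ∈ B) :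
    cnt k a A ≤ cnt k a B := by
  classical
  unfold cnt
  apply Finset.card_le_card
  intro u
  simp only [Finset.mem_filter]
  exact fun hu => ⟨hu.1, h u hu.1 hu.2⟩

lemma exists_of_cnt_lt {k a : ℕ} {A B : Set (Fin n →₀ ℕ)} (h : cnt k a A < cnt k a B) :
    ∃ u ∈ Dk k a, u ∈ B ∧ u ∉ A := by
  by_contra hc
  push Not at hc
  exact absurd (cnt_mono hc) (by omega)

lemma lex_subset {k a : ℕ} {A B : Set (Fin n →₀ ℕ)} (hA : LexIn k a A) (hB : LexIn k a B)
    (h : cnt k a A ≤ cnt k a B) : ∀ u ∈ Dk k a, u ∈ A → u ∈ B := by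
  classical
  intro u hu huA
  by_contra huB
  have : cnt k a B < cnt k a A := by
    unfold cnt
    apply Finset.card_lt_card
    rw [Finset.ssubset_iff_of_subset]
    · exact ⟨u, by simp [hu, huA], by simp [huB]⟩
    · intro v hv
      rw [Finset.mem_filter] at hv ⊢
      refine ⟨hv.1, ?_⟩
      rcases lexLt_tri u v with h1 | h1 | h1
      · exact hA u hu v hv.1 h1 huA
      · exact h1 ▸ huA
      · exact absurd (hB v hv.1 u hu h1 hv.2) huB
  omega

lemma exists_lex (k a c : ℕ) (hc : c ≤ (Dk (n := n) k a).card) :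
    ∃ C : Set (Fin n →₀ ℕ), LexIn k a C ∧ cnt k a C = c := by
  classical
  induction c with
  | zero => exact ⟨∅, fun _ _ _ _ _ h => h.elim, by simp [cnt]⟩
  | succ c ih =>
    obtain ⟨C, hC, hcard⟩ := ih (by omega)
    have hne : ((Dk (n := n) k a).filter (· ∉ C)).Nonempty := by
      rw [← Finset.card_pos]
      have := Finset.card_filter_add_card_filter_not (s := Dk (n := n) k a) (· ∈ C)
      unfold cnt at hcard
      omega
    obtain ⟨m, hm, hmax⟩ := Finset.exists_max_image _ (fun u => toLex u) hne
    rw [Finset.mem_filter] at hm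
    refine ⟨insert m C, ?_, ?_⟩
    · intro u hu v hv huv huC
      rcases huC with rfl | huC
      · by_contra hvC
        have hv2 : v ∉ C := fun h => hvC (Or.inr h)
        have := hmax v (by simp [hv, hv2])
        exact absurd huv (not_lt.2 this)
      · exact Or.inr (hC u hu v hv huv huC)
    · rw [← hcard]
      unfold cnt
      rw [← Finset.card_insert_of_notMem (a := m) (by simp [hm.2])]
      congr 1
      ext u
      simp only [Finset.mem_filter, Finset.mem_insert, Set.mem_insert_iff]
      constructor
      · tauto
      · rintro (rfl | h)
        · exact ⟨hm.1, Or.inl rfl⟩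
        · exact ⟨h.1, Or.inr h.2⟩

lemma sh_lex {k a : ℕ} {C : Set (Fin n →₀ ℕ)} (hC : LexIn k a C) : LexIn k (a+1) (sh k C) := by
  rintro w hw v hv hlt ⟨i, hi, u, huC, rfl⟩
  have hu : u ∈ Dk k a := (add_single_mem_Dk hi).1 hw
  have hne : v.support.Nonempty := by
    rw [Finset.nonempty_iff_ne_empty]
    intro h
    rw [Finsupp.support_eq_empty] at h
    subst h
    have := (mem_Dk.1 hv).1
    simp at this
  obtain ⟨m, hm, hmax⟩ := Finset.exists_max_image v.support id hne
  have hm0 : v m ≠ 0 := by simpa using hm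
  have hm' : ∀ l, m < l → v l = 0 := by
    intro l hl
    by_contra h
    have := hmax l (by simpa using h)
    exact absurd hl (not_lt.2 this)
  have hmk : m.val < k := by
    by_contra h
    exact hm0 ((mem_Dk.1 hv).2 m (by omega))
  obtain ⟨v', rfl⟩ : ∃ v', v = v' + single m 1 := by
    refine ⟨v - single m 1, ?_⟩
    rw [tsub_add_cancel_of_le]
    rw [Finsupp.single_le_iff]
    omega
  have hv' : v' ∈ Dk k a := (add_single_mem_Dk hmk).1 hv
  refine ⟨m, hmk, v', ?_, rfl⟩
  obtain ⟨p, hp1, hp2⟩ := lexLt_iff.1 hlt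
  have hpm : p ≤ m := by
    by_contra h
    rw [hm' p (not_le.1 h)] at hp2
    omega
  have key : lexLt n u v' ∨ v' = u := by
    rcases lt_or_ge i p with hip | hip
    · left
      rw [lexLt_iff]
      refine ⟨i, fun d hd => ?_, ?_⟩
      · have := hp1 d (hd.trans hip)
        simpa [Finsupp.single_apply, hd.ne', (hd.trans (hip.trans_le hpm)).ne'] using this
      · have := hp1 i hip
        simp [Finsupp.single_apply, (hip.trans_le hpm).ne'] at this
        omega
    · have hlow : ∀ d, d < p → u d = v' d := by
        intro d hd
        have := hp1 d hd
        simpa [Finsupp.single_apply, (hd.trans_le hip).ne', (hd.trans_le hpm).ne'] using this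
      rcases lt_or_ge (u p) (v' p) with h | h
      · left
        rw [lexLt_iff]
        exact ⟨p, hlow, h⟩
      · right
        have hmp : m = p := by
          by_contra hne
          simp [Finsupp.single_apply, hne] at hp2
          omega
        apply eq_of_le_degree
        · intro l
          rcases lt_trichotomy l p with hl | rfl | hl
          · rw [hlow l hl]
          · exact h
          · have := hm' l (hmp ▸ hl)
            simp at this
            omega
        · rw [(mem_Dk.1 hu).1, (mem_Dk.1 hv').1]
  rcases key with h | h
  · exact hC u hu v' hv' h huC
  · exact h ▸ huC

lemma mem_Dk_of_zero {k a : ℕ} (hk : k < n) {u : Fin n →₀ ℕ} :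
    u ∈ Dk k a ↔ u ∈ Dk (k+1) a ∧ u ⟨k, hk⟩ = 0 := by
  constructor
  · exact fun h => ⟨Dk_mono h, (mem_Dk.1 h).2 _ le_rfl⟩
  · rintro ⟨h, h0⟩
    refine mem_Dk.2 ⟨(mem_Dk.1 h).1, fun i hi => ?_⟩
    rcases hi.eq_or_lt with h1 | h1
    · have : i = ⟨k, hk⟩ := Fin.ext h1.symm
      rw [this, h0]
    · exact (mem_Dk.1 h).2 i h1

lemma cnt_split1 {k a : ℕ} (hk : k < n) (A : Set (Fin n →₀ ℕ)) :
    cnt (k+1) (a+1) A = cnt k (a+1) A + cnt (k+1) a (layer ⟨k, hk⟩ 1 A) := by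
  classical
  unfold cnt
  rw [← Finset.card_filter_add_card_filter_not (s := (Dk (k+1) (a+1)).filter (· ∈ A))
    (fun u => u ⟨k, hk⟩ = 0)]
  congr 1
  · congr 1
    ext u
    simp only [Finset.mem_filter]
    rw [mem_Dk_of_zero hk]
    tauto
  · symm
    apply Finset.card_bij (fun u _ => u + single ⟨k, hk⟩ 1)
    · intro u hu
      rw [Finset.mem_filter] at hu
      simp only [Finset.mem_filter]
      refine ⟨⟨(add_single_mem_Dk (by simp)).2 hu.1, hu.2⟩, by simp⟩
    · intro u _ v _ h
      exact add_right_cancel h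
    · intro w hw
      simp only [Finset.mem_filter] at hw
      have hle : single ⟨k, hk⟩ 1 ≤ w := by
        rw [Finsupp.single_le_iff]
        have := hw.2
        omega
      refine ⟨w - single ⟨k, hk⟩ 1, ?_, tsub_add_cancel_of_le hle⟩
      rw [Finset.mem_filter, layer, Set.mem_setOf_eq, tsub_add_cancel_of_le hle]
      refine ⟨?_, hw.1.2⟩
      rw [← add_single_mem_Dk (i := ⟨k, hk⟩) (b := 1) (by simp), tsub_add_cancel_of_le hle]
      exact hw.1.1

lemma layer_layer (κ : Fin n) (i j : ℕ) (A : Set (Fin n →₀ ℕ)) :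
    layer κ i (layer κ j A) = layer κ (i + j) A := by
  ext u
  simp [layer, add_assoc, Finsupp.single_add]

lemma layer_zero (κ : Fin n) (A : Set (Fin n →₀ ℕ)) : layer κ 0 A = A := by
  ext u
  simp [layer]

lemma cnt_split {k d : ℕ} (hk : k < n) (A : Set (Fin n →₀ ℕ)) (b : ℕ) (hb : b ≤ d) :
    cnt (k+1) d A = ∑ e ∈ Finset.range b, cnt k (d - e) (layer ⟨k, hk⟩ e A) +
      cnt (k+1) (d - b) (layer ⟨k, hk⟩ b A) := by
  induction b with
  | zero => simp [layer_zero]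
  | succ b ih =>
    rw [ih (by omega), Finset.sum_range_succ]
    obtain ⟨c, hc⟩ : ∃ c, d - b = c + 1 := ⟨d - b - 1, by omega⟩
    have hc' : d - (b+1) = c := by omega
    rw [hc, hc', cnt_split1 hk, layer_layer, add_comm 1 b, add_assoc]

lemma cnt_deg_zero {k l : ℕ} (A : Set (Fin n →₀ ℕ)) : cnt k 0 A = cnt l 0 A := by
  classical
  have : ∀ k, Dk (n := n) k 0 = {0} := by
    intro k
    ext u
    rw [mem_Dk, Finsupp.degree_eq_zero_iff]
    simp only [Finset.mem_singleton, and_iff_left_iff_imp]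
    rintro rfl
    simp
  unfold cnt
  rw [this k, this l]

lemma cnt_zero_vars {a : ℕ} (ha : a ≠ 0) (A : Set (Fin n →₀ ℕ)) : cnt 0 a A = 0 := by
  classical
  unfold cnt
  rw [Finset.card_eq_zero, Finset.filter_eq_empty_iff]
  intro u hu
  exfalso
  obtain ⟨h1, h2⟩ := mem_Dk.1 hu
  have : u = 0 := by
    ext i
    simp [h2 i]
  subst this
  simp at h1
  exact ha h1.symm

lemma cnt_layers {k a : ℕ} (hk : k < n) (A : Set (Fin n →₀ ℕ)) :
    cnt (k+1) a A = ∑ e ∈ Finset.range (a+1), cnt k (a - e) (layer ⟨k, hk⟩ e A) := by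
  rw [cnt_split hk A a le_rfl, Finset.sum_range_succ, Nat.sub_self,
    cnt_deg_zero (k := k+1) (l := k)]

lemma mac_succ {k a : ℕ} (hk : k < n) {A : Set (Fin n →₀ ℕ)} (hA : SSin (k+1) a A) :
    cnt (k+1) (a+1) (sh (k+1) A) = cnt k (a+1) (sh k A) + cnt (k+1) a A := by
  rw [cnt_split1 hk]
  congr 1
  · apply cnt_congr
    intro w hw
    constructor
    · rintro ⟨i, hi, u, hu, rfl⟩
      exact ⟨i, lt_of_add_single_mem_Dk one_ne_zero hw, u, hu, rfl⟩
    · rintro ⟨i, hi, u, hu, rfl⟩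
      exact ⟨i, by omega, u, hu, rfl⟩
  · apply cnt_congr
    intro w hw
    constructor
    · rintro ⟨i, hi, u, hu, h⟩
      by_cases hik : i = ⟨k, hk⟩
      · subst hik
        rw [add_right_cancel h]
        exact hu
      · have hlt : i < ⟨k, hk⟩ := by
          rw [Fin.lt_def]
          have : i.val ≠ k := fun h => hik (Fin.ext h)
          simp only
          omega
        have hle : single i 1 ≤ w := by
          rw [Finsupp.single_le_iff]
          have := DFunLike.congr_fun h i
          simp [Ne.symm hik, hik] at this
          omega
        obtain ⟨x, rfl⟩ : ∃ x, w = x + single i 1 := ⟨_, (tsub_add_cancel_of_le hle).symm⟩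
        have hu' : u = x + single ⟨k, hk⟩ 1 := by
          rw [add_right_comm] at h
          exact (add_right_cancel h).symm
        have huD : u ∈ Dk (k+1) a := by
          rw [← add_single_mem_Dk (b := 1) hi, ← h]
          exact (add_single_mem_Dk (by simp)).2 hw
        rw [hu'] at hu huD
        exact hA x i _ hlt huD hu
    · intro h
      exact ⟨⟨k, hk⟩, by simp, w, h, rfl⟩

/-- The key numerical comparison, relative to Macaulay's inequality in fewer variables. -/
lemma green_step {k : ℕ} (hk : k < n)
    (mac : ∀ (a : ℕ) (A L : Set (Fin n →₀ ℕ)), SSin k a A → LexIn k a L →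
      cnt k a L ≤ cnt k a A → cnt k (a+1) (sh k L) ≤ cnt k (a+1) (sh k A))
    {a : ℕ} {A L : Set (Fin n →₀ ℕ)} (hA : SSin (k+1) a A) (hL : LexIn (k+1) a L)
    (h : cnt (k+1) a L ≤ cnt (k+1) a A) : cnt k a L ≤ cnt k a A := by
  rcases Nat.eq_zero_or_pos k with rfl | hk0
  · rcases Nat.eq_zero_or_pos a with rfl | ha
    · rwa [cnt_deg_zero (k := 0) (l := 1), cnt_deg_zero (k := 0) (l := 1)]
    · rw [cnt_zero_vars (by omega)]
      exact Nat.zero_le _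
  by_contra hcon
  push Not at hcon
  set κ : Fin n := ⟨k, hk⟩ with hκ
  set τ : Fin n := ⟨k - 1, by omega⟩ with hτ
  have hτk : τ.val < k := by simp [hτ]; omega
  have hτκ : τ < κ := by rw [Fin.lt_def]; exact hτk
  have hex : ∀ j, ∃ C : Set (Fin n →₀ ℕ), LexIn k (a - j) C ∧
      cnt k (a - j) C = cnt k (a - j) (layer κ j A) := fun j =>
    exists_lex k (a - j) _ (by classical exact Finset.card_filter_le _ _)
  choose C hClex hCcnt using hex
  have step : ∀ j, j + 1 ≤ a → ∀ u ∈ Dk k (a - (j+1)), u ∈ C (j+1) → u + single τ 1 ∈ C j := by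
    intro j hj u hu huC
    have e1 : a - (j+1) + 1 = a - j := by omega
    have hss : SSin k (a - (j+1)) (layer κ (j+1) A) := by
      intro x p q hpq hx hxA
      have hx2 : x + single κ (j+1) + single q 1 ∈ Dk (k+1) a := by
        have := (add_single_mem_Dk (i := κ) (b := j+1) (k := k+1) (by simp [hκ])).2 (Dk_mono hx)
        rw [add_right_comm]
        convert this using 2
        omega
      have := hA (x + single κ (j+1)) p q hpq hx2 (by
        rw [add_right_comm]; exact hxA)
      rw [add_right_comm] at this
      exact this
    have h1 := mac (a - (j+1)) (layer κ (j+1) A) (C (j+1)) hss (hClex _) (hCcnt _).le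
    rw [e1] at h1
    have h2 : cnt k (a - j) (sh k (layer κ (j+1) A)) ≤ cnt k (a - j) (layer κ j A) := by
      apply cnt_mono
      rintro w hw ⟨i, hi, x, hx, rfl⟩
      have hx1 : x + single κ (j+1) ∈ A := hx
      have hxD : x ∈ Dk k (a - (j+1)) := by
        rw [← e1] at hw
        exact (add_single_mem_Dk hi).1 hw
      have hx2 : x + single κ (j+1) ∈ Dk (k+1) a := by
        have := (add_single_mem_Dk (i := κ) (b := j+1) (k := k+1) (by simp [hκ])).2 (Dk_mono hxD)
        convert this using 2
        omega
      rw [Finsupp.single_add, ← add_assoc] at hx1 hx2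
      have hiκ : i < κ := by rw [Fin.lt_def]; exact hi
      have := hA _ i κ hiκ hx2 hx1
      rw [add_right_comm] at this
      exact this
    rw [← hCcnt j] at h2
    have h3 : LexIn k (a - j) (sh k (C (j+1))) := by
      have := sh_lex (hClex (j+1))
      rwa [e1] at this
    apply lex_subset h3 (hClex j) (h1.trans h2)
    · rw [← e1]
      exact (add_single_mem_Dk hτk).2 hu
    · exact ⟨τ, hτk, u, huC, rfl⟩
  have step2 : ∀ j, j ≤ a → ∀ u ∈ Dk k (a - j), u ∈ C j → u + single τ j ∈ C 0 := by
    intro j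
    induction j with
    | zero => intro _ u _ hu; simpa using hu
    | succ j ih =>
      intro hj u hu huC
      have := ih (by omega) (u + single τ 1) (by
        have e1 : a - (j+1) + 1 = a - j := by omega
        rw [← e1]
        exact (add_single_mem_Dk hτk).2 hu) (step j hj u hu huC)
      rw [add_assoc, ← Finsupp.single_add, add_comm 1 j] at this
      exact this
  have hC0 : cnt k a (C 0) < cnt k a L := by
    have := hCcnt 0
    rw [layer_zero, Nat.sub_zero] at this
    omega
  obtain ⟨w, hwD, hwL, hwC⟩ := exists_of_cnt_lt hC0
  have hall : ∀ j ∈ Finset.range (a+1),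
      cnt k (a - j) (layer κ j A) ≤ cnt k (a - j) (layer κ j L) := by
    intro j hj
    have hj : j ≤ a := by simpa [Nat.lt_succ_iff] using hj
    by_contra hlt
    push Not at hlt
    rw [← hCcnt j] at hlt
    obtain ⟨u, huD, huC, huL⟩ := exists_of_cnt_lt hlt
    apply huL
    have ht := step2 j hj u huD huC
    have htD : u + single τ j ∈ Dk k a := by
      have := (add_single_mem_Dk (b := j) hτk).2 huD
      rwa [Nat.sub_add_cancel hj] at this
    have hvD : u + single κ j ∈ Dk (k+1) a := by
      have := (add_single_mem_Dk (i := κ) (b := j) (k := k+1) (by simp [hκ])).2 (Dk_mono huD)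
      rwa [Nat.sub_add_cancel hj] at this
    refine hL w (Dk_mono hwD) _ hvD ?_ hwL
    have hlex : lexLt n w (u + single τ j) := by
      rcases lexLt_tri w (u + single τ j) with h1 | h1 | h1
      · exact h1
      · exact absurd (h1 ▸ ht) hwC
      · have h0 := hClex 0
        rw [Nat.sub_zero] at h0
        exact absurd (h0 _ htD _ hwD h1 ht) hwC
    obtain ⟨p, hp1, hp2⟩ := lexLt_iff.1 hlex
    have hpτ : p < τ := by
      by_contra hc
      have hpk : p.val < k := by
        by_contra hc2
        rw [(mem_Dk.1 htD).2 p (by omega)] at hp2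
        omega
      have hpe : p = τ := by
        rw [Fin.lt_def] at hc
        apply Fin.ext
        simp only [hτ] at hc ⊢
        omega
      subst hpe
      have : w = u + single τ j := by
        apply eq_of_le_degree
        · intro i
          rcases lt_trichotomy i τ with hi | hi | hi
          · exact (hp1 i hi).le
          · rw [hi]; exact hp2.le
          · have : k ≤ i.val := by
              rw [Fin.lt_def] at hi
              simp only [hτ] at hi
              omega
            rw [(mem_Dk.1 hwD).2 i this]
            exact Nat.zero_le _
        · rw [(mem_Dk.1 hwD).1, (mem_Dk.1 htD).1]
      rw [← this] at hp2
      omega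
    rw [lexLt_iff]
    refine ⟨p, fun d hd => ?_, ?_⟩
    · have := hp1 d hd
      simpa [(hd.trans hpτ).ne', ((hd.trans hpτ).trans hτκ).ne',
        (hd.trans hpτ).ne, ((hd.trans hpτ).trans hτκ).ne] using this
    · simpa [hpτ.ne', (hpτ.trans hτκ).ne', hpτ.ne, (hpτ.trans hτκ).ne] using hp2
  have : cnt (k+1) a A < cnt (k+1) a L := by
    rw [cnt_layers hk, cnt_layers hk]
    apply Finset.sum_lt_sum hall
    refine ⟨0, by simp, ?_⟩
    simpa [layer_zero] using hcon
  omega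

lemma mac (k : ℕ) (hk : k ≤ n) : ∀ (a : ℕ) (A L : Set (Fin n →₀ ℕ)), SSin k a A → LexIn k a L →
    cnt k a L ≤ cnt k a A → cnt k (a+1) (sh k L) ≤ cnt k (a+1) (sh k A) := by
  induction k with
  | zero =>
    intro a A L _ _ _
    rw [cnt_zero_vars (by omega)]
    exact Nat.zero_le _
  | succ k ih =>
    intro a A L hA hL h
    rw [mac_succ hk hA, mac_succ hk hL.ss]
    have := green_step hk (ih (by omega)) hA hL h
    have := ih (by omega) a A L hA.mono hL.mono this
    omega

lemma green {k : ℕ} (hk : k < n) {a : ℕ} {A L : Set (Fin n →₀ ℕ)} (hA : SSin (k+1) a A)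
    (hL : LexIn (k+1) a L) (h : cnt (k+1) a L ≤ cnt (k+1) a A) : cnt k a L ≤ cnt k a A :=
  green_step hk (mac k hk.le) hA hL h

/-- Sets closed under multiplication. -/
def UpSet (A : Set (Fin n →₀ ℕ)) : Prop := ∀ u ∈ A, ∀ v, u + v ∈ A

/-- Strongly stable sets. -/
def SSall (A : Set (Fin n →₀ ℕ)) : Prop :=
  ∀ (u : Fin n →₀ ℕ) (i j : Fin n), i < j → u + single j 1 ∈ A → u + single i 1 ∈ A

/-- Opposite strongly stable sets. -/
def OSall (A : Set (Fin n →₀ ℕ)) : Prop :=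
  ∀ (u : Fin n →₀ ℕ) (i j : Fin n), j < i → u + single j 1 ∈ A → u + single i 1 ∈ A

/-- Product set. -/
def Pr (I P : Set (Fin n →₀ ℕ)) : Set (Fin n →₀ ℕ) := {w | ∃ u ∈ I, ∃ v ∈ P, w = u + v}

lemma exists_peel {v : Fin n →₀ ℕ} (hv : v.degree ≠ 0) : ∃ i v', v = v' + single i 1 := by
  have : v ≠ 0 := by rintro rfl; simp at hv
  obtain ⟨i, hi⟩ := Finsupp.ne_iff.1 this
  refine ⟨i, v - single i 1, (tsub_add_cancel_of_le ?_).symm⟩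
  rw [Finsupp.single_le_iff]
  simp at hi
  omega

lemma ss_move {I : Set (Fin n →₀ ℕ)} (hI : SSall I) (hU : UpSet I) (κ : Fin n) (c : ℕ) :
    ∀ x v : Fin n →₀ ℕ, (∀ i, κ < i → v i = 0) → c ≤ v.degree → x + single κ c ∈ I →
      x + v ∈ I := by
  induction c with
  | zero =>
    intro x v _ _ h
    exact hU x (by simpa using h) v
  | succ c ih =>
    intro x v hv hc h
    obtain ⟨i, v', rfl⟩ := exists_peel (v := v) (by omega)
    have hi : i ≤ κ := by
      by_contra hi
      have := hv i (not_le.1 hi)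
      simp at this
    have h1 : x + single i 1 + single κ c ∈ I := by
      rw [Finsupp.single_add, ← add_assoc] at h
      rw [add_right_comm]
      rcases hi.eq_or_lt with rfl | hi
      · exact h
      · exact hI _ i κ hi h
    have := ih (x + single i 1) v' (fun j hj => by
      have := hv j hj
      simp at this
      exact this.1) (by simpa using hc) h1
    rwa [add_right_comm, add_assoc] at this

lemma os_move {P : Set (Fin n →₀ ℕ)} (hP : OSall P) (κ : Fin n) (c : ℕ) :
    ∀ z y : Fin n →₀ ℕ, (∀ i, κ < i → y i = 0) → y.degree = c → z + y ∈ P →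
      z + single κ c ∈ P := by
  induction c with
  | zero =>
    intro z y _ h0 h
    rw [Finsupp.degree_eq_zero_iff] at h0
    subst h0
    simpa using h
  | succ c ih =>
    intro z y hy hc h
    obtain ⟨i, y', rfl⟩ := exists_peel (v := y) (by omega)
    have hi : i ≤ κ := by
      by_contra hi
      have := hy i (not_le.1 hi)
      simp at this
    have h1 : z + single κ 1 + y' ∈ P := by
      rw [← add_assoc] at h
      rw [add_right_comm]
      rcases hi.eq_or_lt with rfl | hi
      · exact h
      · exact hP _ κ i hi h
    have := ih (z + single κ 1) y' (fun j hj => by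
      have := hy j hj
      simp at this
      exact this.1) (by simpa using hc) h1
    rwa [add_assoc, ← Finsupp.single_add, add_comm 1 c] at this

lemma layer_top {I P : Set (Fin n →₀ ℕ)} (hI : SSall I) (hU : UpSet I) {k a b : ℕ} (hk : k < n)
    (hmin : ∀ v ∈ P, (∀ i : Fin n, k + 1 ≤ i.val → v i = 0) → b ≤ v.degree)
    (hb : single ⟨k, hk⟩ b ∈ P) (w : Fin n →₀ ℕ) (hw : w ∈ Dk (k+1) a) :
    w ∈ layer ⟨k, hk⟩ b (Pr I P) ↔ w ∈ I := by
  set κ : Fin n := ⟨k, hk⟩ with hκ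
  constructor
  · rintro ⟨u, hu, v, hv, h⟩
    have hval : ∀ i, w i + single κ b i = u i + v i := fun i => DFunLike.congr_fun h i
    have hv0 : ∀ i : Fin n, k + 1 ≤ i.val → v i = 0 := by
      intro i hi
      have h1 := hval i
      have hne : i ≠ κ := by rintro rfl; simp [hκ] at hi
      rw [(mem_Dk.1 hw).2 i hi, Finsupp.single_eq_of_ne hne] at h1
      omega
    have hdeg := hmin v hv hv0
    have hκκ := hval κ
    rw [Finsupp.single_eq_same] at hκκ
    set c := min (u κ) b with hc
    have hcu : single κ c ≤ u := by rw [Finsupp.single_le_iff]; omega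
    have hcv : single κ (b - c) ≤ v := by rw [Finsupp.single_le_iff]; omega
    have hwe : w = (u - single κ c) + (v - single κ (b - c)) := by
      ext i
      have := hval i
      by_cases hi : i = κ
      · subst hi
        simp
        omega
      · simp [hi] at this ⊢
        omega
    rw [hwe]
    apply ss_move hI hU κ c
    · intro i hi
      have hi' : k + 1 ≤ i.val := hi
      simp [hv0 i hi']
    · have h2 : (v - single κ (b - c)).degree + (b - c) = v.degree := by
        have h5 := congrArg Finsupp.degree (tsub_add_cancel_of_le hcv)
        rwa [map_add, Finsupp.degree_single] at h5
      omega
    · rwa [tsub_add_cancel_of_le hcu]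
  · intro h
    exact ⟨w, h, _, hb, rfl⟩

lemma layer_low {I P : Set (Fin n →₀ ℕ)} (hI : SSall I) (hU : UpSet I) (hP : OSall P)
    {k a b e : ℕ} (hk : k < n)
    (hmin : ∀ v ∈ P, (∀ i : Fin n, k + 1 ≤ i.val → v i = 0) → b ≤ v.degree)
    (he : e < b) (w : Fin n →₀ ℕ) (hw : w ∈ Dk k a) :
    w ∈ layer ⟨k, hk⟩ e (Pr I P) ↔ w ∈ Pr I (layer ⟨k, hk⟩ e P) := by
  set κ : Fin n := ⟨k, hk⟩ with hκ
  constructor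
  · rintro ⟨u, hu, v, hv, h⟩
    have hval : ∀ i, w i + single κ e i = u i + v i := fun i => DFunLike.congr_fun h i
    have hv0 : ∀ i : Fin n, k + 1 ≤ i.val → v i = 0 := by
      intro i hi
      have h1 := hval i
      have hne : i ≠ κ := by rintro rfl; simp [hκ] at hi
      rw [(mem_Dk.1 hw).2 i (by omega), Finsupp.single_eq_of_ne hne] at h1
      omega
    have hdeg := hmin v hv hv0
    have hκκ := hval κ
    rw [Finsupp.single_eq_same, (mem_Dk.1 hw).2 κ (by simp [hκ]), zero_add] at hκκ
    have hcv : single κ (v κ) ≤ v := by rw [Finsupp.single_le_iff]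
    have hcu : single κ (u κ) ≤ u := by rw [Finsupp.single_le_iff]
    have h2 : (v - single κ (v κ)).degree + v κ = v.degree := by
      have h5 := congrArg Finsupp.degree (tsub_add_cancel_of_le hcv)
      rwa [map_add, Finsupp.degree_single] at h5
    obtain ⟨y, hy, hyd⟩ := Finsupp.exists_le_degree_eq (v - single κ (v κ)) (u κ) (by omega)
    obtain ⟨z, hz⟩ : ∃ z, v - single κ (v κ) = z + y := ⟨_, (tsub_add_cancel_of_le hy).symm⟩
    have hy0 : ∀ i, κ < i → y i = 0 := by
      intro i hi
      have hi' : k + 1 ≤ i.val := hi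
      have := hy i
      simp [hv0 i hi'] at this
      exact this
    have hvz : v = z + single κ (v κ) + y := by
      conv_lhs => rw [← tsub_add_cancel_of_le hcv]
      rw [hz, add_right_comm]
    refine ⟨u - single κ (u κ) + y, ?_, z, ?_, ?_⟩
    · apply ss_move hI hU κ (u κ) _ _ hy0 hyd.ge
      rwa [tsub_add_cancel_of_le hcu]
    · have h3 : z + single κ (v κ) + single κ (u κ) ∈ P := by
        apply os_move hP κ (u κ) _ y hy0 hyd
        rwa [← hvz]
      rw [add_assoc, ← Finsupp.single_add, add_comm (v κ), ← hκκ] at h3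
      exact h3
    · have h4 : w + single κ e = (u - single κ (u κ) + y + z) + single κ e := by
        rw [h]
        conv_lhs => rw [← tsub_add_cancel_of_le hcu, hvz]
        rw [hκκ, Finsupp.single_add]
        generalize u - single κ (u κ) = x
        generalize (single κ (u κ) : Fin n →₀ ℕ) = s
        generalize (single κ (v κ) : Fin n →₀ ℕ) = t
        rw [add_comm s t]
        ext i
        simp only [Finsupp.add_apply]
        ring
      exact add_right_cancel h4
  · rintro ⟨u, hu, v, hv, rfl⟩
    exact ⟨u, hu, _, hv, by rw [add_assoc]⟩

lemma cnt_Pr_formula {I P : Set (Fin n →₀ ℕ)} (hI : SSall I) (hU : UpSet I) (hP : OSall P)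
    {k b d : ℕ} (hk : k < n)
    (hmin : ∀ v ∈ P, (∀ i : Fin n, k + 1 ≤ i.val → v i = 0) → b ≤ v.degree)
    (hb : single ⟨k, hk⟩ b ∈ P) (hbd : b ≤ d) :
    cnt (k+1) d (Pr I P) = ∑ e ∈ Finset.range b, cnt k (d - e) (Pr I (layer ⟨k, hk⟩ e P)) +
      cnt (k+1) (d - b) I := by
  rw [cnt_split hk _ b hbd]
  congr 1
  · apply Finset.sum_congr rfl
    intro e he
    apply cnt_congr
    exact layer_low hI hU hP hk hmin (by simpa using he)
  · apply cnt_congr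
    exact layer_top hI hU hk hmin hb

lemma cnt_eq_zero {k d : ℕ} {A : Set (Fin n →₀ ℕ)} (h : ∀ u ∈ Dk k d, u ∉ A) : cnt k d A = 0 := by
  classical
  unfold cnt
  rw [Finset.card_eq_zero, Finset.filter_eq_empty_iff]
  exact fun u hu => h u hu

lemma main_comb (I L : Set (Fin n →₀ ℕ)) (hI : SSall I) (hIU : UpSet I)
    (hL : SSall L) (hLU : UpSet L) (hlex : ∀ k a, LexIn k a L) (k : ℕ) (hk : k ≤ n) :
    (∀ a, cnt k a L ≤ cnt k a I) → ∀ P : Set (Fin n →₀ ℕ), OSall P →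
      ∀ d, cnt k d (Pr L P) ≤ cnt k d (Pr I P) := by
  induction k with
  | zero =>
    intro h P _ d
    rcases Nat.eq_zero_or_pos d with rfl | hd
    · apply cnt_mono
      rintro w hw ⟨u, hu, v, hv, rfl⟩
      have h0 := (mem_Dk.1 hw).1
      rw [Finsupp.degree_eq_zero_iff, add_eq_zero] at h0
      obtain ⟨rfl, rfl⟩ := h0
      refine ⟨0, ?_, 0, hv, rfl⟩
      by_contra hc
      have h1 : cnt 0 0 I < cnt 0 0 L := by
        classical
        rw [cnt_eq_zero (A := I)]
        · unfold cnt
          rw [Finset.card_pos]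
          exact ⟨0, by simp [mem_Dk, hu]⟩
        · intro u hu hcc
          have := (mem_Dk.1 hu).1
          rw [Finsupp.degree_eq_zero_iff] at this
          subst this
          exact hc hcc
      have := h 0
      omega
    · rw [cnt_zero_vars (by omega)]
      exact Nat.zero_le _
  | succ k ih =>
    intro h P hP d
    by_cases hne : ∃ b, ∃ v ∈ P, (∀ i : Fin n, k + 1 ≤ i.val → v i = 0) ∧ v.degree = b
    · classical
      obtain ⟨v, hv, hv0, hvb⟩ := Nat.find_spec hne
      have hmin : ∀ v ∈ P, (∀ i : Fin n, k + 1 ≤ i.val → v i = 0) → Nat.find hne ≤ v.degree :=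
        fun v hv h0 => Nat.find_min' hne ⟨v, hv, h0, rfl⟩
      generalize Nat.find hne = b at *
      have hb : single ⟨k, hk⟩ b ∈ P := by
        have := os_move hP ⟨k, hk⟩ b 0 v (fun i hi => hv0 i hi) hvb (by simpa using hv)
        simpa using this
      rcases le_or_gt b d with hbd | hbd
      · rw [cnt_Pr_formula hI hIU hP hk hmin hb hbd, cnt_Pr_formula hL hLU hP hk hmin hb hbd]
        apply Nat.add_le_add _ (h _)
        apply Finset.sum_le_sum
        intro e _
        apply ih (by omega)
        · intro a
          exact green hk (fun u i j hij _ => hI u i j hij) (hlex _ _) (h a)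
        · intro u i j hij hu
          have hu' : u + single j 1 + single ⟨k, hk⟩ e ∈ P := hu
          rw [add_right_comm] at hu'
          have := hP _ i j hij hu'
          rw [add_right_comm] at this
          exact this
      · rw [cnt_eq_zero]
        · exact Nat.zero_le _
        · rintro w hw ⟨u, hu, v, hv, rfl⟩
          obtain ⟨h1, h2⟩ := mem_Dk.1 hw
          have := hmin v hv (fun i hi => by
            have := h2 i hi
            simp at this
            exact this.2)
          rw [map_add] at h1
          omega
    · rw [cnt_eq_zero]
      · exact Nat.zero_le _
      · rintro w hw ⟨u, hu, v, hv, rfl⟩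
        obtain ⟨h1, h2⟩ := mem_Dk.1 hw
        exact hne ⟨_, v, hv, fun i hi => by
            have := h2 i hi
            simp at this
            exact this.2, rfl⟩

end BorelHelpers

section BorelTransfer

open Finsupp

variable {K n}

/-- Exponents of the monomials in an ideal. -/
def mons (J : Ideal (PS K n)) : Set (Fin n →₀ ℕ) := {u | MvPolynomial.monomial u (1 : K) ∈ J}

lemma mons_up (J : Ideal (PS K n)) : UpSet (mons J) := by
  intro u hu v
  have := J.mul_mem_right (MvPolynomial.monomial v (1 : K)) hu
  rw [MvPolynomial.monomial_mul, mul_one] at this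
  exact this

lemma mem_of_support {J : Ideal (PS K n)} {f : PS K n} (h : ∀ m ∈ f.support, m ∈ mons J) :
    f ∈ J := by
  rw [f.as_sum]
  apply J.sum_mem
  intro m hm
  have := J.mul_mem_left (MvPolynomial.C (f.coeff m)) (h m hm)
  rwa [MvPolynomial.C_mul_monomial, mul_one] at this

lemma hilb_eq {J : Ideal (PS K n)} {s : Set (Fin n →₀ ℕ)}
    (hs : ∀ f, f ∈ J ↔ ∀ m ∈ f.support, m ∈ s) (d : ℕ) : hilb K n J d = cnt n d s := by
  classical
  have hsub : Submodule.restrictScalars K J ⊓ homogeneousSubmodule (Fin n) K d =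
      MvPolynomial.restrictSupport K (((Dk n d).filter (· ∈ s) : Finset (Fin n →₀ ℕ)) :
        Set (Fin n →₀ ℕ)) := by
    rw [homogeneousSubmodule_eq_finsupp_supported]
    ext f
    rw [Submodule.mem_inf, Submodule.restrictScalars_mem, hs, mem_restrictSupport_iff]
    have hD : ∀ u : Fin n →₀ ℕ, u ∈ Dk n d ↔ u.degree = d := by
      intro u
      rw [mem_Dk]
      exact ⟨fun h => h.1, fun h => ⟨h, fun i hi => absurd i.2 (by omega)⟩⟩
    constructor
    · rintro ⟨h1, h2⟩ m hm
      simp only [Finset.coe_filter, Set.mem_setOf_eq, hD]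
      exact ⟨h2 hm, h1 m hm⟩
    · intro h
      refine ⟨fun m hm => ?_, fun m hm => ?_⟩
      · have := h hm
        simp only [Finset.coe_filter, Set.mem_setOf_eq, hD] at this
        exact this.2
      · have := h hm
        simp only [Finset.coe_filter, Set.mem_setOf_eq, hD] at this
        exact this.1
  unfold hilb
  rw [hsub, Module.finrank_eq_nat_card_basis (MvPolynomial.basisRestrictSupport K _)]
  simp [cnt]

lemma mem_iff_of_monomial {J : Ideal (PS K n)} (hJ : IsMonomialIdeal K n J) (f : PS K n) :
    f ∈ J ↔ ∀ m ∈ f.support, m ∈ mons J :=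
  ⟨fun hf m hm => hJ f hf m hm, mem_of_support⟩

lemma mem_mul_iff {I P : Ideal (PS K n)} (hI : IsMonomialIdeal K n I)
    (hP : IsMonomialIdeal K n P) (f : PS K n) :
    f ∈ I * P ↔ ∀ m ∈ f.support, m ∈ Pr (mons I) (mons P) := by
  classical
  constructor
  · intro hf
    induction hf using Submodule.mul_induction_on' with
    | mem_mul_mem f hf g hg =>
      intro m hm
      have := MvPolynomial.support_mul f g hm
      rw [Finset.mem_add] at this
      obtain ⟨u, hu, v, hv, rfl⟩ := this
      exact ⟨u, hI f hf u hu, v, hP g hg v hv, rfl⟩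
    | add f _ g _ hf hg =>
      intro m hm
      have := MvPolynomial.support_add hm
      rw [Finset.mem_union] at this
      exact this.elim (hf m) (hg m)
  · intro h
    apply mem_of_support
    intro m hm
    obtain ⟨u, hu, v, hv, rfl⟩ := h m hm
    have := Ideal.mul_mem_mul hu hv
    rw [MvPolynomial.monomial_mul, mul_one] at this
    exact this

end BorelTransfer

/-- **Lemma 3.5** (Caviglia–Murai): let `char K = 0`, `I ⊆ S` a 0-Borel (strongly stable)
ideal and `P ⊆ S` an opposite 0-Borel ideal.  Then `dim_K (IP)_d ≥ dim_K (I^lex·P)_d`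
for all `d ≥ 0`. -/
theorem dim_borel_product_ge [CharZero K]
    (I P : Ideal (PS K n)) (hI : IsZeroBorel K n I) (hP : IsOpZeroBorel K n P)
    (Ilex : Ideal (PS K n)) (hIlex : IsLexIdeal K n Ilex)
    (hIlexHilb : ∀ d : ℕ, hilb K n Ilex d = hilb K n I d) :
    ∀ d : ℕ, hilb K n (Ilex * P) d ≤ hilb K n (I * P) d := by
  intro d
  rw [hilb_eq (mem_mul_iff hIlex.1 hP.1), hilb_eq (mem_mul_iff hI.1 hP.1)]
  have hlex : ∀ k a, LexIn k a (mons Ilex) := by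
    intro k a u hu v hv huv huL
    refine hIlex.2 u v ?_ huL huv
    have h1 := (mem_Dk.1 hu).1
    have h2 := (mem_Dk.1 hv).1
    rw [Finsupp.degree_eq_sum] at h1 h2
    unfold expDeg
    rw [h1, h2]
  have hmove : ∀ (u : Fin n →₀ ℕ) (i j : Fin n),
      u + Finsupp.single j 1 + Finsupp.single i 1 - Finsupp.single j 1 =
        u + Finsupp.single i 1 := by
    intro u i j
    rw [add_right_comm, add_tsub_cancel_right]
  refine main_comb (mons I) (mons Ilex) ?_ (mons_up I) ?_ (mons_up Ilex) hlex n le_rfl ?_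
    (mons P) ?_ d
  · intro u i j hij hu
    have := hI.2 _ hu i j hij (by simp)
    rwa [hmove] at this
  · intro u i j hij hu
    have hD : u + Finsupp.single j 1 ∈ Dk n (u + Finsupp.single j 1).degree :=
      mem_Dk.2 ⟨rfl, fun l hl => absurd l.2 (by omega)⟩
    exact (hlex n _).ss u i j hij hD hu
  · intro a
    rw [← hilb_eq (mem_iff_of_monomial hIlex.1), ← hilb_eq (mem_iff_of_monomial hI.1)]
    exact (hIlexHilb a).le
  · intro u i j hij hu
    have := hP.2 _ hu i j hij (by simp)
    rwa [hmove] at this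

end
end

section
/- Let K be an infinite field and S = K[x_1,...,x_n]. Let I ⊆ S be a Borel-fixed ideal and J ⊆ S a homogeneous ideal satisfying h(J) = J for every lower triangular invertible matrix h ∈ GL_n(K). Then for a general change of coordinates g ∈ GL_n(K), one has H(I ∩ g(J), d) = H(I ∩ J, d) and H(I·g(J), d) = H(I·J, d) for all d ≥ 0. -/
open MvPolynomial TensorProduct CategoryTheory

noncomputable section

variable (K : Type) [Field K] (n : ℕ)

/-- `I` is Borel-fixed: `b(I) = I` for every upper triangular invertible matrix `b`. -/
def IsBorelFixed (I : Ideal (PS K n)) : Prop :=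
  ∀ b : GL (Fin n) K, (∀ i j : Fin n, j < i → (b : Matrix (Fin n) (Fin n) K) i j = 0) →
    Ideal.map (coordChange K n b) I = I

/-- The coordinate reversal `op : x_i ↦ x_{n-i+1}`. -/
def opMap : PS K n →ₐ[K] PS K n :=
  MvPolynomial.aeval (fun i => MvPolynomial.X i.rev)

lemma coordChange_mul (g h : GL (Fin n) K) :
    coordChange K n (g * h) = (coordChange K n g).comp (coordChange K n h) := by
  apply MvPolynomial.algHom_ext
  intro i
  simp only [coordChange, aeval_X, AlgHom.comp_apply, map_sum, map_smul, Units.val_mul,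
    Matrix.mul_apply, Finset.sum_smul, Finset.smul_sum]
  rw [Finset.sum_comm]
  refine Finset.sum_congr rfl fun k _ => Finset.sum_congr rfl fun j _ => ?_
  rw [smul_smul, mul_comm]

lemma coordChange_one : coordChange K n 1 = AlgHom.id K _ := by
  apply MvPolynomial.algHom_ext
  intro i
  simp [coordChange, Matrix.one_apply]

/-- The change of coordinates as an algebra automorphism. -/
def coordEquiv (g : GL (Fin n) K) : PS K n ≃ₐ[K] PS K n :=
  AlgEquiv.ofAlgHom (coordChange K n g) (coordChange K n g⁻¹)
    (by rw [← coordChange_mul, mul_inv_cancel, coordChange_one])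
    (by rw [← coordChange_mul, inv_mul_cancel, coordChange_one])

lemma coordChange_homog (g : GL (Fin n) K) (d : ℕ) (f : PS K n) (hf : f.IsHomogeneous d) :
    (coordChange K n g f).IsHomogeneous d := by
  have := MvPolynomial.IsHomogeneous.aeval hf
    (fun i : Fin n => ∑ j, ((g : Matrix (Fin n) (Fin n) K) j i) •
      (MvPolynomial.X j : PS K n)) (n := 1) (fun i => by
      apply MvPolynomial.IsHomogeneous.sum
      intro j _
      rw [MvPolynomial.smul_eq_C_mul]
      exact (MvPolynomial.isHomogeneous_X K j).C_mul _)
  simpa [coordChange] using this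

lemma mem_map_coordChange (g : GL (Fin n) K) (A : Ideal (PS K n)) (f : PS K n) :
    f ∈ Ideal.map (coordChange K n g) A ↔ ∃ a ∈ A, coordChange K n g a = f :=
  Ideal.mem_map_iff_of_surjective (coordChange K n g) (coordEquiv K n g).surjective

lemma hilb_map (g : GL (Fin n) K) (A : Ideal (PS K n)) (d : ℕ) :
    hilb K n (Ideal.map (coordChange K n g) A) d = hilb K n A d := by
  unfold hilb
  rw [← LinearEquiv.finrank_map_eq (coordEquiv K n g).toLinearEquiv
    (Submodule.restrictScalars K A ⊓ homogeneousSubmodule (Fin n) K d)]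
  have key : Submodule.restrictScalars K (Ideal.map (coordChange K n g) A) ⊓
      homogeneousSubmodule (Fin n) K d =
      Submodule.map ((coordEquiv K n g).toLinearEquiv : PS K n →ₗ[K] PS K n)
      (Submodule.restrictScalars K A ⊓ homogeneousSubmodule (Fin n) K d) := by
    ext f
    simp only [Submodule.mem_inf, Submodule.restrictScalars_mem, mem_map_coordChange,
      Submodule.mem_map, mem_homogeneousSubmodule]
    constructor
    · rintro ⟨⟨a, ha, rfl⟩, hd⟩
      refine ⟨a, ⟨ha, ?_⟩, rfl⟩
      have h1 := coordChange_homog K n g⁻¹ d _ hd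
      rwa [← AlgHom.comp_apply, ← coordChange_mul, inv_mul_cancel, coordChange_one] at h1
    · rintro ⟨a, ⟨ha, hd⟩, rfl⟩
      exact ⟨⟨a, ha, rfl⟩, coordChange_homog K n g d a hd⟩
  rw [key]

lemma map_inf_coordChange (g : GL (Fin n) K) (A B : Ideal (PS K n)) :
    Ideal.map (coordChange K n g) (A ⊓ B) =
      Ideal.map (coordChange K n g) A ⊓ Ideal.map (coordChange K n g) B := by
  ext f
  simp only [Ideal.mem_inf, mem_map_coordChange]
  constructor
  · rintro ⟨a, ⟨h1, h2⟩, rfl⟩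
    exact ⟨⟨a, h1, rfl⟩, ⟨a, h2, rfl⟩⟩
  · rintro ⟨⟨a, h1, rfl⟩, ⟨b, h2, h⟩⟩
    obtain rfl : b = a := (coordEquiv K n g).injective h
    exact ⟨b, ⟨h1, h2⟩, rfl⟩

/-- Trailing principal submatrix. -/
def trail {R : Type} (M : Matrix (Fin n) (Fin n) R) (i : Fin n) :
    Matrix {j : Fin n // i ≤ j} {j : Fin n // i ≤ j} R :=
  M.submatrix Subtype.val Subtype.val

lemma exists_lower (g : GL (Fin n) K)
    (hg : ∀ i, (trail n (g : Matrix (Fin n) (Fin n) K) i).det ≠ 0) :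
    ∃ l : GL (Fin n) K, (∀ i j : Fin n, i < j → (l : Matrix (Fin n) (Fin n) K) i j = 0) ∧
      ∀ i j : Fin n, j < i → ((g * l : GL (Fin n) K) : Matrix (Fin n) (Fin n) K) i j = 0 := by
  classical
  have hv : ∀ i : Fin n, ∃ v : {j : Fin n // i ≤ j} → K,
      (trail n (g : Matrix (Fin n) (Fin n) K) i).mulVec v = Pi.single ⟨i, le_rfl⟩ 1 := by
    intro i
    refine ⟨(trail n (g : Matrix (Fin n) (Fin n) K) i)⁻¹.mulVec (Pi.single ⟨i, le_rfl⟩ 1), ?_⟩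
    rw [Matrix.mulVec_mulVec, Matrix.mul_nonsing_inv _ (isUnit_iff_ne_zero.mpr (hg i)),
      Matrix.one_mulVec]
  choose v hv using hv
  let L : Matrix (Fin n) (Fin n) K := fun j i => if h : i ≤ j then v i ⟨j, h⟩ else 0
  have hL : ∀ k i : Fin n, i ≤ k →
      ((g : Matrix (Fin n) (Fin n) K) * L) k i = if k = i then 1 else 0 := by
    intro k i hki
    have h1 := congrFun (hv i) ⟨k, hki⟩
    rw [Pi.single_apply] at h1
    simp only [Subtype.mk.injEq] at h1
    rw [← h1, Matrix.mul_apply, Matrix.mulVec, dotProduct]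
    rw [← Finset.sum_subset (Finset.subset_univ (Finset.univ.filter (fun j => i ≤ j))),
      Finset.sum_subtype (p := fun j => i ≤ j) _ (by simp)]
    · refine Finset.sum_congr rfl fun j _ => ?_
      simp [L, trail, j.2]
    · intro j _ hj
      have hj' : ¬ i ≤ j := by simpa using hj
      simp [L, hj']
  have hdet : ((g : Matrix (Fin n) (Fin n) K) * L).det = 1 := by
    rw [Matrix.det_of_isUpperTriangular]
    · simp [hL]
    · intro a b hab
      have hab' : b < a := hab
      rw [hL a b hab'.le, if_neg hab'.ne']
  have hLdet : IsUnit L.det := by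
    rw [Matrix.det_mul] at hdet
    exact isUnit_iff_ne_zero.mpr fun h => by simp [h] at hdet
  refine ⟨Matrix.GeneralLinearGroup.mk'' L hLdet, ?_, ?_⟩
  · intro i j hij
    exact dif_neg (not_le.mpr hij)
  · intro i j hij
    have := hL i j hij.le
    rw [if_neg hij.ne'] at this
    exact this

/-- **Remark 3.6** (Caviglia–Murai): let `I ⊆ S` be a Borel-fixed ideal and `J ⊆ S` a
homogeneous ideal fixed by every lower triangular invertible change of coordinates.  For
a general change of coordinates `g ∈ GL_n(K)`, `H(I ∩ g(J), d) = H(I ∩ J, d)` and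
`H(I·g(J), d) = H(I·J, d)` for all `d ≥ 0`. -/
theorem hilb_general_eq_of_borel_fixed [Infinite K]
    (I J : Ideal (PS K n)) (hI : IsBorelFixed K n I) (hJhom : IsHomog K n J)
    (hJ : ∀ h : GL (Fin n) K,
      (∀ i j : Fin n, i < j → (h : Matrix (Fin n) (Fin n) K) i j = 0) →
        Ideal.map (coordChange K n h) J = J) :
    generally K n (fun g => ∀ d : ℕ,
      hilb K n (I ⊓ Ideal.map (coordChange K n g) J) d = hilb K n (I ⊓ J) d ∧
      hilb K n (I * Ideal.map (coordChange K n g) J) d = hilb K n (I * J) d) := by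
  classical
  let X : Matrix (Fin n) (Fin n) (MvPolynomial (Fin n × Fin n) K) :=
    fun i j => MvPolynomial.X (i, j)
  have hev : ∀ M : Matrix (Fin n) (Fin n) K,
      MvPolynomial.eval (fun p => M p.1 p.2) (∏ i, (trail n X i).det) =
        ∏ i, (trail n M i).det := by
    intro M
    rw [map_prod]
    refine Finset.prod_congr rfl fun i _ => ?_
    rw [RingHom.map_det]
    congr 1
    ext a b
    exact MvPolynomial.eval_X _
  refine ⟨∏ i, (trail n X i).det, ?_, ?_⟩
  · intro h
    have h1 := hev 1
    have h2 : ∀ i, (trail n (1 : Matrix (Fin n) (Fin n) K) i).det = 1 := by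
      intro i
      rw [trail, Matrix.submatrix_one _ Subtype.val_injective, Matrix.det_one]
    rw [h] at h1
    simp [h2] at h1
  · intro g hg d
    rw [hev, Finset.prod_ne_zero_iff] at hg
    obtain ⟨l, hl, hb⟩ := exists_lower K n g fun i => hg i (Finset.mem_univ i)
    have e1 : Ideal.map (coordChange K n g) J = Ideal.map (coordChange K n (g * l)) J := by
      conv_lhs => rw [← hJ l hl]
      rw [coordChange_mul]
      exact Ideal.map_map _ _
    have e2 := hI (g * l) hb
    rw [e1]
    constructor
    · conv_lhs => rw [← e2]
      rw [← map_inf_coordChange, hilb_map]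
    · conv_lhs => rw [← e2]
      rw [← Ideal.map_mul, hilb_map]

end
end
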